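/- arXiv:1809.04645 — 2 statements merged into one kernel-verified Lean document; each statement's English description precedes it below -/
import Mathlib

section
/- Let K be a perfect field and A a finite-dimensional commutative local K-algebra with maximal ideal 𝔪. Let a₁, …, a_n generate A as a K-algebra, and for each i write the minimal polynomial of a_i over K as p_i^{e_i} with p_i ∈ K[X] irreducible and e_i ≥ 1. Then 𝔪 is the ideal of A generated by the elements p₁(a₁), …, p_n(a_n). -/
/-!
Put `I = (pᵢ(aᵢ))ᵢ`. The algebra `A ⧸ I` is generated by roots of the separable polynomials `pᵢ`.
A derivation kills every root `x` of a separable polynomial `p`, because `0 = D (p x) = p' x • D x`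
and `p' x` is a unit; hence `A ⧸ I` has no Kähler differentials, and over a field a finitely
generated algebra with this property is reduced. An infinite family of generators is handled one
finite subfamily at a time. So `I` is radical. Its generators `pᵢ(aᵢ)` are nilpotent, so it is the
nilradical, and in a local algebra integral over a field the nilradical is the maximal ideal.
-/

open Polynomial

theorem isUnit_aeval_derivative_of_separable {R A : Type*} [CommSemiring R]
    [CommSemiring A] [Algebra R A] {f : R[X]} (hf : f.Separable) {x : A} (hx : aeval x f = 0) :
    IsUnit (aeval x (derivative f)) := by
  obtain ⟨u, v, huv⟩ := hf
  have hv : aeval x v * aeval x (derivative f) = 1 := by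
    simpa [hx] using congrArg (aeval x) huv
  exact .of_mul_eq_one_right _ hv

section Derivation

variable {R A : Type*} [CommRing R] [CommRing A] [Algebra R A]

theorem derivation_apply_eq_zero_of_isSeparable {M : Type*} [AddCommMonoid M] [Module R M]
    [Module A M] (D : Derivation R A M) {x : A} (hx : IsSeparable R x) : D x = 0 := by
  have hunit : IsUnit (aeval x (derivative (minpoly R x))) :=
    isUnit_aeval_derivative_of_separable hx (minpoly.aeval R x)
  rw [← hunit.smul_eq_zero, ← D.map_aeval, minpoly.aeval, map_zero]

theorem formallyUnramified_of_adjoin_eq_top_of_isSeparable {s : Set A} (hs : Algebra.adjoin R s = ⊤)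
    (hsep : ∀ x ∈ s, IsSeparable R x) : Algebra.FormallyUnramified R A := by
  have hD : KaehlerDifferential.D R A = 0 :=
    Derivation.ext_of_adjoin_eq_top s hs fun x hx =>
      derivation_apply_eq_zero_of_isSeparable _ (hsep x hx)
  have hspan : (⊤ : Submodule A (Ω[A⁄R])) = ⊥ := by
    rw [← KaehlerDifferential.span_range_derivation, hD, Submodule.span_eq_bot]
    rintro _ ⟨x, rfl⟩
    rfl
  exact ⟨(Submodule.subsingleton_iff A).mp (subsingleton_of_bot_eq_top hspan.symm)⟩

end Derivation

theorem exists_finite_subset_mem_adjoin {R A : Type*} [CommSemiring R] [Semiring A] [Algebra R A]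
    {s : Set A} {x : A} (hx : x ∈ Algebra.adjoin R s) :
    ∃ t ⊆ s, t.Finite ∧ x ∈ Algebra.adjoin R t := by
  induction hx using Algebra.adjoin_induction with
  | mem x hx => exact ⟨{x}, by simpa, Set.finite_singleton x, Algebra.self_mem_adjoin_singleton R x⟩
  | algebraMap r => exact ⟨∅, s.empty_subset, Set.finite_empty, Subalgebra.algebraMap_mem _ r⟩
  | add x y _ _ hx hy =>
    obtain ⟨t, hts, ht, hxt⟩ := hx
    obtain ⟨u, hus, hu, hyu⟩ := hy
    exact ⟨t ∪ u, Set.union_subset hts hus, ht.union hu,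
      add_mem (Algebra.adjoin_mono Set.subset_union_left hxt)
        (Algebra.adjoin_mono Set.subset_union_right hyu)⟩
  | mul x y _ _ hx hy =>
    obtain ⟨t, hts, ht, hxt⟩ := hx
    obtain ⟨u, hus, hu, hyu⟩ := hy
    exact ⟨t ∪ u, Set.union_subset hts hus, ht.union hu,
      mul_mem (Algebra.adjoin_mono Set.subset_union_left hxt)
        (Algebra.adjoin_mono Set.subset_union_right hyu)⟩

theorem krullDimLE_zero_of_isIntegral (R A : Type*) [CommRing R] [CommRing A] [Algebra R A]
    [Ring.KrullDimLE 0 R] [Algebra.IsIntegral R A] : Ring.KrullDimLE 0 A :=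
  .mk₀ fun P _ => Ideal.isMaximal_of_isIntegral_of_isMaximal_comap (R := R) P inferInstance

theorem isIntegral_of_adjoin_eq_top {R A : Type*} [CommRing R] [CommRing A] [Algebra R A]
    {s : Set A} (hs : Algebra.adjoin R s = ⊤) (hint : ∀ x ∈ s, IsIntegral R x) :
    Algebra.IsIntegral R A :=
  integralClosure_eq_top_iff.mp (top_le_iff.mp (hs ▸ Algebra.adjoin_le hint))

theorem isSeparable_of_aeval_eq_zero {K A : Type*} [Field K] [Ring A] [Algebra K A]
    {f : K[X]} (hf : f.Separable) {x : A} (hx : aeval x f = 0) : IsSeparable K x :=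
  hf.of_dvd (minpoly.dvd K x hx)

theorem isIntegral_of_isNilpotent_aeval {K A : Type*} [Field K] [Ring A] [Algebra K A]
    {f : K[X]} (hf : f ≠ 0) {x : A} (hx : IsNilpotent (aeval x f)) : IsIntegral K x := by
  obtain ⟨m, hm⟩ := hx
  exact IsAlgebraic.isIntegral ⟨f ^ m, pow_ne_zero m hf, by rw [map_pow, hm]⟩

section Field

variable {K A : Type*} [Field K] [CommRing A] [Algebra K A]

theorem isReduced_adjoin_of_finite_of_isSeparable {t : Set A} (ht : t.Finite)
    (hsep : ∀ x ∈ t, IsSeparable K x) : IsReduced (Algebra.adjoin K t) := by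
  have : Algebra.FiniteType K (Algebra.adjoin K t) :=
    (Algebra.adjoin K t).fg_iff_finiteType.mp (Subalgebra.fg_def.mpr ⟨t, ht, rfl⟩)
  have : Algebra.FormallyUnramified K (Algebra.adjoin K t) :=
    formallyUnramified_of_adjoin_eq_top_of_isSeparable Algebra.adjoin_adjoin_coe_preimage
      fun x hx =>
        (isSeparable_map_iff (Algebra.adjoin K t).val Subtype.val_injective).mp (hsep x hx)
  exact Algebra.FormallyUnramified.isReduced_of_field K _

theorem isReduced_of_adjoin_eq_top_of_isSeparable {s : Set A} (hs : Algebra.adjoin K s = ⊤)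
    (hsep : ∀ x ∈ s, IsSeparable K x) : IsReduced A := by
  refine ⟨fun x hx => ?_⟩
  obtain ⟨t, hts, ht, hxt⟩ := exists_finite_subset_mem_adjoin (hs ▸ Algebra.mem_top : x ∈ _)
  have := isReduced_adjoin_of_finite_of_isSeparable ht fun y hy => hsep y (hts hy)
  have hx' : IsNilpotent (⟨x, hxt⟩ : Algebra.adjoin K t) :=
    (IsNilpotent.map_iff (f := (Algebra.adjoin K t).val) Subtype.val_injective).mp hx
  exact congrArg Subtype.val hx'.eq_zero

theorem isRadical_span_range_aeval_of_separable {ι : Type*} (a : ι → A) (p : ι → K[X])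
    (hgen : Algebra.adjoin K (Set.range a) = ⊤) (hsep : ∀ i, (p i).Separable) :
    (Ideal.span (Set.range fun i => aeval (a i) (p i))).IsRadical := by
  set I := Ideal.span (Set.range fun i => aeval (a i) (p i))
  let π : A →ₐ[K] A ⧸ I := Ideal.Quotient.mkₐ K I
  have hroot : ∀ i, aeval (π (a i)) (p i) = 0 := fun i => by
    rw [aeval_algHom_apply]
    exact Ideal.Quotient.eq_zero_iff_mem.mpr (Ideal.subset_span ⟨i, rfl⟩)
  have hgen' : Algebra.adjoin K (π '' Set.range a) = ⊤ := by
    rw [← AlgHom.map_adjoin, hgen, Algebra.map_top, AlgHom.range_eq_top]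
    exact Ideal.Quotient.mkₐ_surjective K I
  rw [Ideal.isRadical_iff_quotient_reduced]
  refine isReduced_of_adjoin_eq_top_of_isSeparable hgen' ?_
  rintro _ ⟨_, ⟨i, rfl⟩, rfl⟩
  exact isSeparable_of_aeval_eq_zero (hsep i) (hroot i)

theorem nilradical_eq_span_range_aeval {ι : Type*} (a : ι → A) (p : ι → K[X])
    (hgen : Algebra.adjoin K (Set.range a) = ⊤) (hsep : ∀ i, (p i).Separable)
    (hnil : ∀ i, IsNilpotent (aeval (a i) (p i))) :
    nilradical A = Ideal.span (Set.range fun i => aeval (a i) (p i)) := by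
  apply le_antisymm
  · rw [nilradical, (isRadical_span_range_aeval_of_separable a p hgen hsep).radical_le_iff]
    exact bot_le
  · rw [Ideal.span_le]
    rintro _ ⟨i, rfl⟩
    exact mem_nilradical.mpr (hnil i)

theorem maximalIdeal_eq_span_of_minpoly_primePow_general [IsLocalRing A] {ι : Type*}
    (a : ι → A) (p : ι → K[X])
    (hgen : Algebra.adjoin K (Set.range a) = ⊤) (hsep : ∀ i, (p i).Separable)
    (hnil : ∀ i, IsNilpotent (aeval (a i) (p i))) :
    IsLocalRing.maximalIdeal A = Ideal.span (Set.range fun i => aeval (a i) (p i)) := by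
  have : Algebra.IsIntegral K A := isIntegral_of_adjoin_eq_top hgen <|
    Set.forall_mem_range.mpr fun i => isIntegral_of_isNilpotent_aeval (hsep i).ne_zero (hnil i)
  have : Ring.KrullDimLE 0 A := krullDimLE_zero_of_isIntegral K A
  rw [← Ring.KrullDimLE.nilradical_eq_maximalIdeal,
    nilradical_eq_span_range_aeval a p hgen hsep hnil]

end Field

/-- Let `K` be a perfect field and `A` a finite-dimensional commutative local `K`-algebra
with maximal ideal `𝔪`. If `a₁, …, aₙ` generate `A` as a `K`-algebra and the minimal
polynomial of each `aᵢ` is `pᵢ^{eᵢ}` with `pᵢ` irreducible and `eᵢ ≥ 1`, then `𝔪` is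
generated (as an ideal) by the elements `p₁(a₁), …, pₙ(aₙ)`. -/
theorem maximalIdeal_eq_span_of_minpoly_primePow
    (K A : Type*) [Field K] [PerfectField K] [CommRing A] [Algebra K A]
    [FiniteDimensional K A] [IsLocalRing A]
    {n : ℕ} (a : Fin n → A) (p : Fin n → Polynomial K) (e : Fin n → ℕ)
    (hgen : Algebra.adjoin K (Set.range a) = ⊤)
    (hp : ∀ i, Irreducible (p i)) (he : ∀ i, 1 ≤ e i)
    (hmin : ∀ i, minpoly K (a i) = p i ^ e i) :
    IsLocalRing.maximalIdeal A =
      Ideal.span (Set.range fun i => Polynomial.aeval (a i) (p i)) := by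
  exact maximalIdeal_eq_span_of_minpoly_primePow_general a p hgen
    (fun i => PerfectField.separable_of_irreducible (hp i))
    fun i => ⟨e i, by rw [← map_pow, ← hmin i, minpoly.aeval]⟩
end

section
/- Let R be a commutative ring, n ≥ 1 and N ≥ 1 integers such that n!·N (viewed in R) is a non-zero-divisor of R. Let f be a homogeneous polynomial of degree n in two variables X, Y over R which is invariant under both R-algebra substitutions (X, Y) ↦ (X, N·X + Y) and (X, Y) ↦ (X + N·Y, Y). Then f = 0. (Since the principal congruence subgroup Γ(N) contains the matrices [[1,N],[0,1]] and [[1,0],[N,1]], this shows that the Γ(N)-invariants of V_{n}(R) vanish for n ≥ 1.) -/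
/-!
Invariance under `X i ↦ X i + p`, with `p` a polynomial in the other variables, says that `f`, read
as a univariate polynomial `g` in `X i`, satisfies `g(T + p) = g(T)`. If `g` had degree `d + 1`, the
coefficients of `T ^ d` would differ by `(d + 1) * p` times the leading coefficient, so `X i` cannot
occur in `f` once `(d + 1) * p` is a non-zero-divisor. With such an invariance for each variable,
`f` is constant, and `0` is the only constant that is homogeneous of positive degree.
-/

open MvPolynomial

open scoped Nat nonZeroDivisors

theorem taylor_coeff_of_natDegree_le_succ {R : Type*} [Semiring R] {g : Polynomial R} {d : ℕ}
    (hg : g.natDegree ≤ d + 1) (r : R) :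
    (Polynomial.taylor r g).coeff d = g.coeff d + (d + 1 : ℕ) * g.coeff (d + 1) * r := by
  have hdeg : (Polynomial.hasseDeriv d g).natDegree < 2 := by
    have := Polynomial.natDegree_hasseDeriv_le g d
    omega
  rw [Polynomial.taylor_coeff, Polynomial.eval_eq_sum_range' hdeg]
  simp [Finset.sum_range_succ, Polynomial.hasseDeriv_coeff, add_comm 1 d]

theorem natDegree_eq_zero_of_taylor_eq_self {R : Type*} [CommRing R] {g : Polynomial R} {n : ℕ}
    {r : R} (hg : g.natDegree ≤ n) (hr : (n ! : R) * r ∈ R⁰)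
    (h : Polynomial.taylor r g = g) : g.natDegree = 0 := by
  by_contra hpos
  obtain ⟨d, hd⟩ := Nat.exists_eq_succ_of_ne_zero hpos
  obtain ⟨k, hk⟩ : d + 1 ∣ n ! := Nat.dvd_factorial d.succ_pos (hd.symm.trans_le hg)
  have hlead : ((d + 1 : ℕ) : R) * g.coeff (d + 1) * r = 0 := by
    simpa [h] using taylor_coeff_of_natDegree_le_succ hd.le r
  have hzero : g.coeff (d + 1) = 0 := by
    refine (mem_nonZeroDivisors_iff.1 hr).2 _ ?_
    rw [hk, Nat.cast_mul]
    linear_combination (k : R) * hlead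
  have hg0 : g = 0 := by rwa [← Polynomial.leadingCoeff_eq_zero, Polynomial.leadingCoeff, hd]
  exact hpos (by simp [hg0])

theorem C_mul_X_mem_nonZeroDivisors {R σ : Type*} [CommRing R] {a : R} (ha : a ∈ R⁰) (j : σ) :
    C a * X j ∈ (MvPolynomial σ R)⁰ := by
  rw [C_mul_X_eq_monomial, ← isRegular_iff_mem_nonZeroDivisors]
  exact (isRegular_iff_mem_nonZeroDivisors.2 ha).monomial

section CommSemiring

variable {R σ : Type*} [CommSemiring R] [DecidableEq σ]

/-- The elementary substitution `X i ↦ X i + p`, fixing all other variables. Taking `p` in the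
polynomial ring on `{k // k ≠ i}` encodes that `X i` does not occur in `p`. -/
noncomputable def shear (i : σ) (p : MvPolynomial {k // k ≠ i} R) :
    MvPolynomial σ R →ₐ[R] MvPolynomial σ R :=
  aeval (Function.update X i (X i + rename Subtype.val p))

/-- The ring of polynomials, viewed as the ring of univariate polynomials in `X i` with coefficients
in the polynomials in the other variables; its degree is `degreeOf i`, by
`MvPolynomial.degreeOf_eq_natDegree`. -/
noncomputable def singleOut (i : σ) :
    MvPolynomial σ R ≃ₐ[R] Polynomial (MvPolynomial {k // k ≠ i} R) :=
  (renameEquiv R (Equiv.optionSubtypeNe i).symm).trans (optionEquivLeft R {k // k ≠ i})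

theorem singleOut_X_self (i : σ) :
    singleOut i (X i : MvPolynomial σ R) = Polynomial.X := by
  simp [singleOut]

theorem singleOut_X_of_ne {i k : σ} (hk : k ≠ i) :
    singleOut i (X k : MvPolynomial σ R) = Polynomial.C (X ⟨k, hk⟩) := by
  simp [singleOut, hk]

theorem singleOut_rename_val (i : σ) (p : MvPolynomial {k // k ≠ i} R) :
    singleOut i (rename Subtype.val p) = Polynomial.C p := by
  have : (singleOut (R := R) i).toAlgHom.comp (rename Subtype.val) =
      IsScalarTower.toAlgHom R (MvPolynomial {k // k ≠ i} R) _ := by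
    ext1 k
    simp [singleOut_X_of_ne k.2, Polynomial.algebraMap_eq]
  exact DFunLike.congr_fun this p

theorem singleOut_shear (i : σ) (p : MvPolynomial {k // k ≠ i} R) (f : MvPolynomial σ R) :
    singleOut i (shear i p f) = Polynomial.taylor p (singleOut i f) := by
  have : (singleOut i).toAlgHom.comp (shear i p) =
      ((Polynomial.taylorAlgHom p).restrictScalars R).comp (singleOut i).toAlgHom := by
    ext1 k
    by_cases hk : k = i
    · subst hk
      simp [shear, singleOut_X_self, singleOut_rename_val]
    · simp [shear, hk, singleOut_X_of_ne]
  exact DFunLike.congr_fun this f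

theorem shear_fin_two_zero (p : MvPolynomial {k : Fin 2 // k ≠ 0} R) :
    shear 0 p = aeval ![X 0 + rename Subtype.val p, X 1] := by
  ext1 k
  fin_cases k <;> simp [shear]

theorem shear_fin_two_one (p : MvPolynomial {k : Fin 2 // k ≠ 1} R) :
    shear 1 p = aeval ![X 0, X 1 + rename Subtype.val p] := by
  ext1 k
  fin_cases k <;> simp [shear]

end CommSemiring

section CommRing

variable {R σ : Type*} [CommRing R] [DecidableEq σ]

theorem degreeOf_eq_zero_of_shear_eq_self {f : MvPolynomial σ R} {i : σ} {n : ℕ}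
    {p : MvPolynomial {k // k ≠ i} R} (hf : f.degreeOf i ≤ n)
    (hp : (n ! : MvPolynomial {k // k ≠ i} R) * p ∈ (MvPolynomial {k // k ≠ i} R)⁰)
    (h : shear i p f = f) : f.degreeOf i = 0 := by
  have htaylor : Polynomial.taylor p (singleOut i f) = singleOut i f := by
    rw [← singleOut_shear, h]
  rw [degreeOf_eq_natDegree] at hf ⊢
  exact natDegree_eq_zero_of_taylor_eq_self hf hp htaylor

theorem vn_gammaN_invariants_eq_zero_general {n : ℕ} (hn : n ≠ 0) {f : MvPolynomial σ R}
    (hf : f.IsHomogeneous n) (p : ∀ i, MvPolynomial {k // k ≠ i} R)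
    (hp : ∀ i, (n ! : MvPolynomial {k // k ≠ i} R) * p i ∈ (MvPolynomial {k // k ≠ i} R)⁰)
    (h : ∀ i, shear i (p i) f = f) : f = 0 := by
  have hdegreeOf (i : σ) : f.degreeOf i = 0 :=
    degreeOf_eq_zero_of_shear_eq_self
      ((degreeOf_le_totalDegree f i).trans hf.totalDegree_le) (hp i) (h i)
  have htotal : f.totalDegree = 0 :=
    (MvPolynomial.totalDegree_eq_zero_iff σ f).2 fun m hm i =>
      Nat.le_zero.1 ((monomial_le_degreeOf i hm).trans (hdegreeOf i).le)
  by_contra hne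
  exact hn ((hf.totalDegree hne).symm.trans htotal)

end CommRing

/-- Let `R` be a commutative ring and `n, N ≥ 1` such that `n!·N` is a non-zero-divisor in
`R`. A homogeneous polynomial `f ∈ R[X,Y]` of degree `n` which satisfies both
`f(X, N·X + Y) = f(X, Y)` and `f(X + N·Y, Y) = f(X, Y)` (i.e. is invariant under the matrices
`[[1,N],[0,1]]` and `[[1,0],[N,1]]`, which lie in `Γ(N)`) is zero. -/
theorem vn_gammaN_invariants_eq_zero
    (R : Type*) [CommRing R] (n N : ℕ) (hn : 1 ≤ n) (hN : 1 ≤ N)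
    (hreg : ((n.factorial * N : ℕ) : R) ∈ nonZeroDivisors R)
    (f : MvPolynomial (Fin 2) R) (hf : f.IsHomogeneous n)
    (h1 : aeval ![(X 0 : MvPolynomial (Fin 2) R),
      (N : MvPolynomial (Fin 2) R) * X 0 + X 1] f = f)
    (h2 : aeval ![(X 0 : MvPolynomial (Fin 2) R) + (N : MvPolynomial (Fin 2) R) * X 1,
      (X 1 : MvPolynomial (Fin 2) R)] f = f) :
    f = 0 := by
  refine vn_gammaN_invariants_eq_zero_general (Nat.one_le_iff_ne_zero.1 hn) hf
    (fun i => (N : MvPolynomial {k // k ≠ i} R) * X ⟨i.rev, by fin_cases i <;> decide⟩)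
    (fun i => ?_) (Fin.forall_fin_two.2 ⟨?_, ?_⟩)
  · simpa [mul_assoc] using C_mul_X_mem_nonZeroDivisors hreg _
  · simpa [shear_fin_two_zero] using h2
  · simpa [shear_fin_two_one, add_comm] using h1
end
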